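/- arXiv:2508.10516 — 5 statements merged into one kernel-verified Lean document; each statement's English description precedes it below -/
import Mathlib

section
/- The set AGREECONCEPTS(r) of all agree concepts of a relation r, ordered by (C₁, π₁) ≤ (C₂, π₂) iff C₁ ⊆ C₂ (equivalently π₂ ⊑ π₁), is a complete lattice. For every family P of agree concepts, the infimum is (⋂_{(C,π)∈P} C, h'(+_{(C,π)∈P} π)) and the supremum is (h(⋃_{(C,π)∈P} C), •_{(C,π)∈P} π), where + denotes the supremum and • the infimum of partitions under refinement. -/
/-!
The maps `f` and `g` form an antitone Galois connection between criterion sets `C ⊆ 𝒞` and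
partitions of `r`, and agree concepts are its closed pairs, so each is determined by its intent
and the intents are exactly the closed sets `h(C) = C`. The two identities which carry the
proof say that each map turns a supremum into an infimum:

* `fCrit_supPart`: `f(+ π) = 𝒞 ∩ ⋂ C`, since agreement on one criterion is an equivalence
  relation and so passes to the equivalence closure of overlapping classes;
* `infPart_eq_gPart`: `• π = g(⋃ C)`, since agreeing on a union means agreeing on every member.

Together with `g ∘ f ∘ g = g` on subsets of `𝒞`, they show that the two candidate pairs are agree
concepts; that these are the greatest lower and the least upper bound is then a statement about
intents.
-/

/-- Two tuples agree on a set `C` of criteria when their values coincide on every `c ∈ C`. -/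
def AgreeOn {T Crit : Type*} (val : T → Crit → ℝ) (C : Set Crit) (t t' : T) : Prop :=
  ∀ c ∈ C, val t c = val t' c

/-- `π` is a partition of the set `r`: a family of nonempty pairwise disjoint sets whose
union is `r`. -/
def IsPartitionOf {T : Type*} (r : Set T) (π : Set (Set T)) : Prop :=
  (∀ X ∈ π, X.Nonempty) ∧ (∀ X ∈ π, ∀ Y ∈ π, X ≠ Y → Disjoint X Y) ∧ ⋃₀ π = r

/-- Refinement order on partitions: every class of `π` is contained in some class of `π'`. -/
def Refines {T : Type*} (π π' : Set (Set T)) : Prop := ∀ X ∈ π, ∃ Y ∈ π', X ⊆ Y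

/-- `gPart val r C` is the partition of `r` into equivalence classes of agreement on `C`. -/
def gPart {T Crit : Type*} (val : T → Crit → ℝ) (r : Set T) (C : Set Crit) : Set (Set T) :=
  {X | ∃ t ∈ r, X = {t' ∈ r | AgreeOn val C t t'}}

/-- `fCrit val 𝒞 π` is the set of criteria of `𝒞` on which any two tuples lying in a common
class of `π` agree. -/
def fCrit {T Crit : Type*} (val : T → Crit → ℝ) (𝒞 : Set Crit) (π : Set (Set T)) : Set Crit :=
  {c ∈ 𝒞 | ∀ X ∈ π, ∀ t ∈ X, ∀ t' ∈ X, val t c = val t' c}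

/-- The closure operator `h = f ∘ g` on criterion sets. -/
def hCl {T Crit : Type*} (val : T → Crit → ℝ) (𝒞 : Set Crit) (r : Set T) (C : Set Crit) :
    Set Crit :=
  fCrit val 𝒞 (gPart val r C)

/-- `t'` dominates `t` on `C` (all preferences minimized). -/
def Dominates {T Crit : Type*} (val : T → Crit → ℝ) (C : Set Crit) (t' t : T) : Prop :=
  (∀ c ∈ C, val t' c ≤ val t c) ∧ ∃ c ∈ C, val t' c < val t c

/-- The Skyline of `r` on the criterion set `C`: tuples of `r` dominated by no tuple of `r`. -/
def Skyline {T Crit : Type*} (val : T → Crit → ℝ) (C : Set Crit) (r : Set T) : Set T :=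
  {t ∈ r | ∀ t' ∈ r, ¬ Dominates val C t' t}

/-- The disagree condition: no two distinct tuples of `r` agree on all criteria of `C`. -/
def DAC {T Crit : Type*} (val : T → Crit → ℝ) (C : Set Crit) (r : Set T) : Prop :=
  ∀ t ∈ r, ∀ t' ∈ r, t ≠ t' → ¬ AgreeOn val C t t'

/-- The equivalence-style relation induced by a partition: `x` and `y` lie in a common class. -/
def PRel {T : Type*} (π : Set (Set T)) (x y : T) : Prop := ∃ X ∈ π, x ∈ X ∧ y ∈ X

/-- The partition of `r` induced by a relation `R` (classes of elements of `r` related to a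
given element). -/
def PartOfRel {T : Type*} (r : Set T) (R : T → T → Prop) : Set (Set T) :=
  {X | ∃ t ∈ r, X = {t' ∈ r | R t t'}}

/-- Infimum (common refinement, `•`) of a family of partitions of `r`. -/
def InfPart {T : Type*} (r : Set T) (P : Set (Set (Set T))) : Set (Set T) :=
  PartOfRel r (fun x y => ∀ π ∈ P, PRel π x y)

/-- Supremum (`+`) of a family of partitions of `r`, obtained by transitive closure of
overlapping classes (equivalence closure of the union of the induced relations). -/
def SupPart {T : Type*} (r : Set T) (P : Set (Set (Set T))) : Set (Set T) :=
  PartOfRel r (Relation.EqvGen (fun x y => ∃ π ∈ P, PRel π x y))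

/-- An agree concept of `r`: a pair `(C, π)` with `π = g(C)` and `C = f(π)`. -/
structure AgreeConcept {T Crit : Type*} (val : T → Crit → ℝ) (𝒞 : Set Crit) (r : Set T) where
  intent : Set Crit
  extent : Set (Set T)
  extent_eq : extent = gPart val r intent
  intent_eq : intent = fCrit val 𝒞 extent

namespace AgreeConcept

variable {T Crit : Type*} {val : T → Crit → ℝ} {𝒞 : Set Crit} {r : Set T}

theorem pRel_gPart {C : Set Crit} {x y : T} :
    PRel (gPart val r C) x y ↔ x ∈ r ∧ y ∈ r ∧ AgreeOn val C x y := by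
  constructor
  · rintro ⟨X, ⟨t, -, rfl⟩, ⟨hx, hx'⟩, hy, hy'⟩
    exact ⟨hx, hy, fun c hc => (hx' c hc).symm.trans (hy' c hc)⟩
  · rintro ⟨hx, hy, h⟩
    exact ⟨_, ⟨x, hx, rfl⟩, ⟨hx, fun _ _ => rfl⟩, hy, h⟩

theorem mem_fCrit {π : Set (Set T)} {c : Crit} :
    c ∈ fCrit val 𝒞 π ↔ c ∈ 𝒞 ∧ ∀ x y, PRel π x y → val x c = val y c := by
  constructor
  · rintro ⟨hc, h⟩
    exact ⟨hc, fun x y ⟨X, hX, hx, hy⟩ => h X hX x hx y hy⟩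
  · rintro ⟨hc, h⟩
    exact ⟨hc, fun X hX x hx y hy => h x y ⟨X, hX, hx, hy⟩⟩

theorem mem_hCl {C : Set Crit} {c : Crit} :
    c ∈ hCl val 𝒞 r C ↔
      c ∈ 𝒞 ∧ ∀ x ∈ r, ∀ y ∈ r, AgreeOn val C x y → val x c = val y c := by
  simp only [hCl, mem_fCrit, pRel_gPart]
  grind

theorem hCl_mono {C D : Set Crit} (h : C ⊆ D) : hCl val 𝒞 r C ⊆ hCl val 𝒞 r D := by
  intro c hc
  rw [mem_hCl] at hc ⊢
  exact ⟨hc.1, fun x hx y hy hxy => hc.2 x hx y hy fun d hd => hxy d (h hd)⟩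

theorem subset_hCl {C : Set Crit} (h : C ⊆ 𝒞) : C ⊆ hCl val 𝒞 r C := fun _ hc =>
  mem_hCl.2 ⟨h hc, fun _ _ _ _ hxy => hxy _ hc⟩

theorem gPart_hCl {C : Set Crit} (h : C ⊆ 𝒞) :
    gPart val r (hCl val 𝒞 r C) = gPart val r C := by
  have key : ∀ x ∈ r, {y ∈ r | AgreeOn val (hCl val 𝒞 r C) x y} = {y ∈ r | AgreeOn val C x y} := by
    intro x hx
    ext y
    exact ⟨fun hy => ⟨hy.1, fun c hc => hy.2 c (subset_hCl h hc)⟩,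
      fun hy => ⟨hy.1, fun c hc => (mem_hCl.1 hc).2 x hx y hy.1 hy.2⟩⟩
  ext X
  constructor
  · rintro ⟨x, hx, rfl⟩
    exact ⟨x, hx, key x hx⟩
  · rintro ⟨x, hx, rfl⟩
    exact ⟨x, hx, (key x hx).symm⟩

theorem hCl_intent (a : AgreeConcept val 𝒞 r) : hCl val 𝒞 r a.intent = a.intent := by
  rw [hCl, ← a.extent_eq, ← a.intent_eq]

theorem intent_subset (a : AgreeConcept val 𝒞 r) : a.intent ⊆ 𝒞 := by
  rw [a.intent_eq]
  exact fun c hc => hc.1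

theorem intent_injective :
    Function.Injective (AgreeConcept.intent : AgreeConcept val 𝒞 r → Set Crit) := by
  rintro ⟨C, π, hπ, hC⟩ ⟨D, ρ, hρ, hD⟩ (rfl : C = D)
  obtain rfl : π = ρ := hπ.trans hρ.symm
  rfl

theorem intent_subset_iff_refines (a b : AgreeConcept val 𝒞 r) :
    a.intent ⊆ b.intent ↔ Refines b.extent a.extent := by
  constructor
  · intro h X hX
    rw [b.extent_eq] at hX
    obtain ⟨x, hx, rfl⟩ := hX
    rw [a.extent_eq]
    exact ⟨_, ⟨x, hx, rfl⟩, fun y hy => ⟨hy.1, fun c hc => hy.2 c (h hc)⟩⟩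
  · intro h
    rw [a.intent_eq, b.intent_eq]
    rintro c ⟨hc, hc'⟩
    refine ⟨hc, fun X hX x hx y hy => ?_⟩
    obtain ⟨Y, hY, hXY⟩ := h X hX
    exact hc' Y hY x (hXY hx) y (hXY hy)

/-- For the empty family both sides are `𝒞`: the supremum is then the partition of `r` into
singletons. -/
theorem fCrit_supPart (P : Set (AgreeConcept val 𝒞 r)) :
    fCrit val 𝒞 (SupPart r {π | ∃ p ∈ P, π = p.extent}) =
      𝒞 ∩ ⋂₀ {C | ∃ p ∈ P, C = p.intent} := by
  ext c
  constructor
  · rintro ⟨hc, h⟩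
    refine ⟨hc, ?_⟩
    rintro _ ⟨p, hp, rfl⟩
    rw [p.intent_eq, mem_fCrit]
    refine ⟨hc, fun x y hxy => ?_⟩
    have hr := hxy
    rw [p.extent_eq, pRel_gPart] at hr
    exact h _ ⟨x, hr.1, rfl⟩ x ⟨hr.1, .refl x⟩ y ⟨hr.2.1, .rel x y ⟨_, ⟨p, hp, rfl⟩, hxy⟩⟩
  · rintro ⟨hc, h⟩
    have key : ∀ x y, Relation.EqvGen
        (fun x y => ∃ π ∈ {π | ∃ p ∈ P, π = p.extent}, PRel π x y) x y → val x c = val y c := by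
      intro x y hxy
      induction hxy with
      | rel x y hxy =>
        obtain ⟨_, ⟨p, hp, rfl⟩, hxy⟩ := hxy
        have hcp : c ∈ p.intent := h _ ⟨p, hp, rfl⟩
        rw [p.intent_eq, mem_fCrit] at hcp
        exact hcp.2 x y hxy
      | refl x => rfl
      | symm x y _ ih => exact ih.symm
      | trans x y z _ _ ih₁ ih₂ => exact ih₁.trans ih₂
    refine ⟨hc, ?_⟩
    rintro _ ⟨t, -, rfl⟩ x hx y hy
    exact (key t x hx.2).symm.trans (key t y hy.2)

theorem infPart_eq_gPart (P : Set (AgreeConcept val 𝒞 r)) :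
    InfPart r {π | ∃ p ∈ P, π = p.extent} =
      gPart val r (⋃₀ {C | ∃ p ∈ P, C = p.intent}) := by
  have key : ∀ x ∈ r, {y ∈ r | ∀ π ∈ {π | ∃ p ∈ P, π = p.extent}, PRel π x y} =
      {y ∈ r | AgreeOn val (⋃₀ {C | ∃ p ∈ P, C = p.intent}) x y} := by
    intro x hx
    ext y
    constructor
    · rintro ⟨hy, h⟩
      refine ⟨hy, ?_⟩
      rintro c ⟨_, ⟨p, hp, rfl⟩, hc⟩
      have hxy := h _ ⟨p, hp, rfl⟩
      rw [p.extent_eq, pRel_gPart] at hxy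
      exact hxy.2.2 c hc
    · rintro ⟨hy, h⟩
      refine ⟨hy, ?_⟩
      rintro _ ⟨p, hp, rfl⟩
      rw [p.extent_eq, pRel_gPart]
      exact ⟨hx, hy, fun c hc => h c ⟨_, ⟨p, hp, rfl⟩, hc⟩⟩
  ext X
  constructor
  · rintro ⟨x, hx, rfl⟩
    exact ⟨x, hx, key x hx⟩
  · rintro ⟨x, hx, rfl⟩
    exact ⟨x, hx, (key x hx).symm⟩

/-- The agree concept generated by a criterion set `C ⊆ 𝒞`, with intent `h(C)` and extent `g(C)`. -/
def ofCrit (C : Set Crit) (h : C ⊆ 𝒞) : AgreeConcept val 𝒞 r where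
  intent := hCl val 𝒞 r C
  extent := gPart val r C
  extent_eq := (gPart_hCl h).symm
  intent_eq := rfl

theorem hCl_inter_sInter (P : Set (AgreeConcept val 𝒞 r)) :
    hCl val 𝒞 r (𝒞 ∩ ⋂₀ {C | ∃ p ∈ P, C = p.intent}) =
      𝒞 ∩ ⋂₀ {C | ∃ p ∈ P, C = p.intent} := by
  refine Set.Subset.antisymm (fun c hc => ⟨hc.1, ?_⟩) (subset_hCl Set.inter_subset_left)
  rintro _ ⟨p, hp, rfl⟩
  rw [← p.hCl_intent]
  exact hCl_mono (fun d hd => hd.2 _ ⟨p, hp, rfl⟩) hc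

theorem sUnion_intent_subset (P : Set (AgreeConcept val 𝒞 r)) :
    ⋃₀ {C | ∃ p ∈ P, C = p.intent} ⊆ 𝒞 := by
  rintro c ⟨_, ⟨p, -, rfl⟩, hc⟩
  exact p.intent_subset hc

/-- The infimum of a family of agree concepts, generated by the intersection of the intents.
The intersection with `𝒞` matters only for the empty family. -/
def inf (P : Set (AgreeConcept val 𝒞 r)) : AgreeConcept val 𝒞 r :=
  ofCrit (𝒞 ∩ ⋂₀ {C | ∃ p ∈ P, C = p.intent}) Set.inter_subset_left

/-- The supremum of a family of agree concepts, generated by the union of the intents. -/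
def sup (P : Set (AgreeConcept val 𝒞 r)) : AgreeConcept val 𝒞 r :=
  ofCrit (⋃₀ {C | ∃ p ∈ P, C = p.intent}) (sUnion_intent_subset P)

theorem intent_inf (P : Set (AgreeConcept val 𝒞 r)) :
    (inf P).intent = 𝒞 ∩ ⋂₀ {C | ∃ p ∈ P, C = p.intent} :=
  hCl_inter_sInter P

/-- Agree concepts ordered by inclusion of intents. -/
@[reducible]
def partialOrder : PartialOrder (AgreeConcept val 𝒞 r) :=
  PartialOrder.lift AgreeConcept.intent intent_injective

attribute [local instance] partialOrder

theorem isGLB_inf (P : Set (AgreeConcept val 𝒞 r)) : IsGLB P (inf P) := by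
  constructor
  · intro p hp
    change (inf P).intent ⊆ p.intent
    rw [intent_inf]
    exact fun c hc => hc.2 _ ⟨p, hp, rfl⟩
  · intro a ha
    change a.intent ⊆ (inf P).intent
    rw [intent_inf]
    refine fun c hc => ⟨a.intent_subset hc, ?_⟩
    rintro _ ⟨p, hp, rfl⟩
    exact ha hp hc

theorem isLUB_sup (P : Set (AgreeConcept val 𝒞 r)) : IsLUB P (sup P) := by
  constructor
  · intro p hp c hc
    exact subset_hCl (sUnion_intent_subset P) ⟨_, ⟨p, hp, rfl⟩, hc⟩
  · intro a ha
    change hCl val 𝒞 r _ ⊆ a.intent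
    rw [← a.hCl_intent]
    apply hCl_mono
    rintro c ⟨_, ⟨p, hp, rfl⟩, hc⟩
    exact ha hp hc

/-- The complete lattice of agree concepts. -/
@[reducible]
def completeLattice : CompleteLattice (AgreeConcept val 𝒞 r) :=
  letI : InfSet (AgreeConcept val 𝒞 r) := ⟨inf⟩
  completeLatticeOfInf _ isGLB_inf

theorem sSup_eq_sup (P : Set (AgreeConcept val 𝒞 r)) : completeLattice.sSup P = sup P :=
  IsLUB.unique (completeLattice.isLUB_sSup P) (isLUB_sup P)

end AgreeConcept

/-- The agree concepts of `r`, ordered by inclusion of intents (equivalently, reverse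
refinement of extents), form a complete lattice, with infimum
`(⋂ C, h'(+ π))` and supremum `(h(⋃ C), • π)`. -/
theorem agreeConcepts_completeLattice {T Crit : Type*} (𝒞 : Finset Crit) (val : T → Crit → ℝ)
    (r : Finset T) :
    ∃ L : CompleteLattice (AgreeConcept val (↑𝒞 : Set Crit) (↑r : Set T)),
      (∀ a b, L.le a b ↔ a.intent ⊆ b.intent) ∧
      (∀ a b, L.le a b ↔ Refines b.extent a.extent) ∧
      (∀ P : Set (AgreeConcept val (↑𝒞 : Set Crit) (↑r : Set T)),
        (L.sInf P).intent = ↑𝒞 ∩ ⋂₀ {C | ∃ p ∈ P, C = p.intent} ∧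
        (L.sInf P).extent =
          gPart val ↑r (fCrit val ↑𝒞 (SupPart ↑r {π | ∃ p ∈ P, π = p.extent}))) ∧
      (∀ P : Set (AgreeConcept val (↑𝒞 : Set Crit) (↑r : Set T)),
        (L.sSup P).intent = hCl val ↑𝒞 ↑r (⋃₀ {C | ∃ p ∈ P, C = p.intent}) ∧
        (L.sSup P).extent = InfPart ↑r {π | ∃ p ∈ P, π = p.extent}) := by
  refine ⟨AgreeConcept.completeLattice, fun a b => Iff.rfl,
    AgreeConcept.intent_subset_iff_refines, fun P => ⟨AgreeConcept.intent_inf P, ?_⟩, fun P => ?_⟩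
  · rw [AgreeConcept.fCrit_supPart]
    rfl
  · rw [AgreeConcept.sSup_eq_sup, AgreeConcept.infPart_eq_gPart]
    exact ⟨rfl, rfl⟩
end

section
/- For every criterion set C ⊆ 𝒞, the closure h(C) equals the intersection of all agree sets of r containing C: h(C) = ⋂ { Agr(t, t') : t, t' ∈ r, t ≠ t', C ⊆ Agr(t, t') }, where the intersection over the empty family is taken to be 𝒞. -/
/-- The agree set of two tuples: the criteria of `𝒞` on which they share the same value. -/
def Agr {T Crit : Type*} (val : T → Crit → ℝ) (𝒞 : Set Crit) (t t' : T) : Set Crit :=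
  {c ∈ 𝒞 | val t c = val t' c}

/-- `h(C)` is the intersection of all agree sets of `r` containing `C` (the intersection over
the empty family being `𝒞`). -/
theorem hCl_eq_sInter_agreeSets {T Crit : Type*} (𝒞 : Finset Crit) (val : T → Crit → ℝ)
    (r : Finset T) :
    ∀ C : Set Crit, C ⊆ ↑𝒞 →
      hCl val ↑𝒞 ↑r C =
        ↑𝒞 ∩ ⋂₀ {A | ∃ t ∈ (↑r : Set T), ∃ t' ∈ (↑r : Set T), t ≠ t' ∧
          C ⊆ Agr val ↑𝒞 t t' ∧ A = Agr val ↑𝒞 t t'} := by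
  intro C hC
  ext c
  constructor
  · rintro ⟨hc, h⟩
    refine ⟨hc, ?_⟩
    rintro _ ⟨t, ht, t', ht', -, hA, rfl⟩
    -- `t` and `t'` both lie in the class of `t`.
    exact ⟨hc, h _ ⟨t, ht, rfl⟩ t ⟨ht, fun _ _ => rfl⟩ t' ⟨ht', fun d hd => (hA hd).2⟩⟩
  · rintro ⟨hc, h⟩
    refine ⟨hc, ?_⟩
    rintro _ ⟨s, -, rfl⟩ t ⟨ht, hst⟩ t' ⟨ht', hst'⟩
    by_cases hne : t = t'
    · rw [hne]
    · exact (h _ ⟨t, ht, t', ht', hne,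
        fun d hd => ⟨hC hd, (hst d hd).symm.trans (hst' d hd)⟩, rfl⟩).2
end

section
/- Let r be a relation and C ⊆ 𝒞 a criterion set satisfying the disagree condition DAC_C(r). Then for every criterion c₀ ∈ 𝒞 ∖ C, the Skyline on C is contained in the Skyline on C ∪ {c₀}: S_C(r) ⊆ S_{C ∪ {c₀}}(r). -/
/-- Under the disagree condition on `C`, the Skyline on `C` is contained in the Skyline on
`C ∪ {c₀}` for every criterion `c₀ ∈ 𝒞 ∖ C`. -/
theorem skyline_subset_skyline_insert {T Crit : Type*} (𝒞 : Finset Crit) (val : T → Crit → ℝ)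
    (r : Finset T) (C : Set Crit) (hC : C ⊆ ↑𝒞) (hdac : DAC val C ↑r) :
    ∀ c₀ ∈ (↑𝒞 : Set Crit), c₀ ∉ C →
      Skyline val C ↑r ⊆ Skyline val (C ∪ {c₀}) ↑r := by
  intro c₀ _ _ t ht
  refine ⟨ht.1, fun t' ht' hdom => ht.2 t' ht' ?_⟩
  have hle : ∀ c ∈ C, val t' c ≤ val t c := fun c hc => hdom.1 c (Or.inl hc)
  have hne : t' ≠ t := by
    rintro rfl
    obtain ⟨c, _, hlt⟩ := hdom.2
    exact lt_irrefl _ hlt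
  -- The strict inequality may occur only at `c₀`; the disagree condition yields one inside `C`.
  refine ⟨hle, ?_⟩
  by_contra! hge
  exact hdac t' ht' t ht.1 hne fun c hc => le_antisymm (hle c hc) (hge c hc)
end

section
/- Let C ⊆ 𝒞 satisfy the disagree condition DAC_C(r). Then for every criterion set X with C ⊆ X ⊆ 𝒞 (so that DAC_X(r) also holds), the Skyline on C is contained in the Skyline on X: S_C(r) ⊆ S_X(r). -/
/-- Under the disagree condition on `C`, the Skyline on `C` is contained in the Skyline on
every `X` with `C ⊆ X ⊆ 𝒞`. -/
theorem skyline_subset_skyline_superset {T Crit : Type*} (𝒞 : Finset Crit)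
    (val : T → Crit → ℝ) (r : Finset T) (C : Set Crit) (hC : C ⊆ ↑𝒞)
    (hdac : DAC val C ↑r) :
    ∀ X : Set Crit, C ⊆ X → X ⊆ ↑𝒞 → Skyline val C ↑r ⊆ Skyline val X ↑r := by
  rintro X hCX - t ⟨ht, hmax⟩
  refine ⟨ht, ?_⟩
  rintro t' ht' ⟨hle, c, -, hlt⟩
  -- A dominator of `t` on `X` is weakly below `t` on `C`; nondomination on `C` excludes strict
  -- inequality there, so the two tuples agree on `C`, although they are distinct.
  have hne : t ≠ t' := by
    rintro rfl
    exact lt_irrefl _ hlt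
  refine hdac t ht t' ht' hne fun d hd => ?_
  by_contra hd'
  exact hmax t' ht'
    ⟨fun e he => hle e (hCX he), d, hd, lt_of_le_of_ne (hle d (hCX hd)) (Ne.symm hd')⟩
end

section
/- Fundamental theorem for Skycube partial materialization: for every relation r and every criterion set C ⊆ 𝒞, the Skyline on C is contained in the Skyline on the closure of C: S_C(r) ⊆ S_{h(C)}(r). -/
/-- The closure is extensive: criteria of `C` are constant on each class of `g(C)`. -/
theorem subset_hCl {T Crit : Type*} {val : T → Crit → ℝ} {𝒞 : Set Crit} {r : Set T}
    {C : Set Crit} (hC : C ⊆ 𝒞) : C ⊆ hCl val 𝒞 r C := by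
  intro c hc
  refine ⟨hC hc, ?_⟩
  rintro X ⟨s, -, rfl⟩ t ht t' ht'
  exact (ht.2 c hc).symm.trans (ht'.2 c hc)

theorem AgreeOn.hCl {T Crit : Type*} {val : T → Crit → ℝ} {𝒞 : Set Crit} {r : Set T}
    {C : Set Crit} {t t' : T} (ht : t ∈ r) (ht' : t' ∈ r) (h : AgreeOn val C t t') :
    AgreeOn val (hCl val 𝒞 r C) t t' :=
  fun _ hc => hc.2 _ ⟨t, ht, rfl⟩ t ⟨ht, fun _ _ => rfl⟩ t' ⟨ht', h⟩

/-- Fundamental theorem for Skycube partial materialization: for every criterion set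
`C ⊆ 𝒞`, the Skyline on `C` is contained in the Skyline on the closure `h(C)`. -/
theorem skyline_subset_skyline_closure {T Crit : Type*} (𝒞 : Finset Crit)
    (val : T → Crit → ℝ) (r : Finset T) :
    ∀ C : Set Crit, C ⊆ ↑𝒞 →
      Skyline val C ↑r ⊆ Skyline val (hCl val ↑𝒞 ↑r C) ↑r := by
  rintro C hC t ⟨ht, hnd⟩
  refine ⟨ht, ?_⟩
  rintro t' ht' ⟨hle, c, hc, hlt⟩
  have hagree : AgreeOn val C t t' := fun d hd =>
    le_antisymm
      (not_lt.mp fun h => hnd t' ht' ⟨fun e he => hle e (subset_hCl hC he), d, hd, h⟩)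
      (hle d (subset_hCl hC hd))
  exact hlt.ne' (hagree.hCl ht ht' c hc)
end
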